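/- The piecewise density P (equal to P₁ on [0,a], P₂ on [a,√2·a], P₃ on [√2·a,√3·a]) is continuously differentiable on the open interval (0, √3·a): in particular the one-sided derivatives match at the breakpoints, i.e. the left derivative of P₁ at l = a equals the right derivative of P₂ at l = a, and the left derivative of P₂ at l = √2·a equals the right derivative of P₃ at l = √2·a. -/

import Mathlib

/-!
Although `√` and `arccos` are not differentiable at the breakpoints `a` and `√2 * a`, the terms
with a vanishing square root in the denominator cancel when `P₂` and `P₃` are differentiated, and
what remains extends continuously to the left endpoint of each range. A continuous function whose
derivative has a limit at an endpoint has that limit as its one-sided derivative there, so it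
suffices to compare the values of the pieces and of their derivatives at `a` and `√2 * a`.
-/

open MeasureTheory Real Set

/-- The density of separations on the range `0 ≤ l ≤ a`. -/
noncomputable def P₁ (a l : ℝ) : ℝ :=
  l ^ 2 * (4 * π * a ^ 3 - 6 * π * a ^ 2 * l + 8 * a * l ^ 2 - l ^ 3) / a ^ 6

/-- The density of separations on the range `a ≤ l ≤ √2·a`. -/
noncomputable def P₂ (a l : ℝ) : ℝ :=
  l / a ^ 6 *
    (2 * l ^ 4 + 6 * a ^ 2 * l ^ 2 - a ^ 4 - 2 * π * a ^ 3 * (4 * l - 3 * a)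
      - 8 * a * (2 * l ^ 2 + a ^ 2) * Real.sqrt (l ^ 2 - a ^ 2)
      + 24 * a ^ 2 * l ^ 2 * Real.arccos (a / l))

/-- The density of separations on the range `√2·a ≤ l ≤ √3·a`. -/
noncomputable def P₃ (a l : ℝ) : ℝ :=
  l / a ^ 6 *
    (8 * a * (l ^ 2 + a ^ 2) * Real.sqrt (l ^ 2 - 2 * a ^ 2)
      - (l ^ 2 + a ^ 2) * (l ^ 2 + 5 * a ^ 2)
      + 2 * π * a ^ 2 * (3 * l ^ 2 - 4 * a * l + 3 * a ^ 2)
      + 24 * a ^ 3 * l * Real.arccos (a ^ 2 / (l ^ 2 - a ^ 2))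
      - 24 * a ^ 2 * (l ^ 2 + a ^ 2) * Real.arccos (a / Real.sqrt (l ^ 2 - a ^ 2)))

/-- The piecewise probability density of separations: `P₁` on `[0,a]`,
`P₂` on `[a, √2·a]`, `P₃` on `[√2·a, √3·a]`. -/
noncomputable def P (a l : ℝ) : ℝ :=
  if l ≤ a then P₁ a l
  else if l ≤ Real.sqrt 2 * a then P₂ a l
  else P₃ a l

open Filter Topology

section Gluing

variable {𝕜 E : Type*} [NontriviallyNormedField 𝕜] [NormedAddCommGroup E] [NormedSpace 𝕜 E]

/-- `f` is continuously differentiable on `s`, with derivative `f'` relative to `s`. Unlike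
`ContDiffOn 𝕜 1 f s`, it names the derivative, so that pieces can be compared where they meet. -/
structure HasContDerivOn (f f' : 𝕜 → E) (s : Set 𝕜) : Prop where
  hasDerivWithinAt : ∀ x ∈ s, HasDerivWithinAt f (f' x) s x
  continuousOn : ContinuousOn f' s

namespace HasContDerivOn

theorem mono {f f' : 𝕜 → E} {s t : Set 𝕜} (h : HasContDerivOn f f' t) (hst : s ⊆ t) :
    HasContDerivOn f f' s :=
  ⟨fun x hx => (h.hasDerivWithinAt x (hst hx)).mono hst, h.continuousOn.mono hst⟩

theorem congr {f f' g g' : 𝕜 → E} {s : Set 𝕜} (h : HasContDerivOn f f' s) (hg : EqOn g f s)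
    (hg' : EqOn g' f' s) : HasContDerivOn g g' s where
  hasDerivWithinAt x hx := by
    rw [hg' hx]
    exact (h.hasDerivWithinAt x hx).congr hg (hg hx)
  continuousOn := h.continuousOn.congr hg'

theorem union_of_isClosed {f f' : 𝕜 → E} {s t : Set 𝕜} (hs : HasContDerivOn f f' s)
    (ht : HasContDerivOn f f' t) (hsc : IsClosed s) (htc : IsClosed t) :
    HasContDerivOn f f' (s ∪ t) := by
  have extend {u : Set 𝕜} (hu : HasContDerivOn f f' u) (huc : IsClosed u) (x : 𝕜) :
      HasDerivWithinAt f (f' x) u x := by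
    by_cases hx : x ∈ u
    · exact hu.hasDerivWithinAt x hx
    · exact HasFDerivWithinAt.of_notMem_closure (by rwa [huc.closure_eq])
  exact ⟨fun x _ => (extend hs hsc x).union (extend ht htc x),
    hs.continuousOn.union_of_isClosed ht.continuousOn hsc htc⟩

theorem contDiff_one {f f' : 𝕜 → E} (h : HasContDerivOn f f' univ) : ContDiff 𝕜 1 f := by
  have hf (x : 𝕜) : HasDerivAt f (f' x) x :=
    hasDerivWithinAt_univ.1 (h.hasDerivWithinAt x (mem_univ x))
  rw [contDiff_one_iff_deriv, deriv_eq hf]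
  exact ⟨fun x => (hf x).differentiableAt, continuousOn_univ.1 h.continuousOn⟩

variable {F : Type*} [NormedAddCommGroup F] [NormedSpace ℝ F]
  {f f' g g' : ℝ → F} {s : Set ℝ} {c : ℝ}

theorem ite_le (hf : HasContDerivOn f f' (s ∩ Iic c)) (hg : HasContDerivOn g g' (s ∩ Ici c))
    (hs : IsClosed s) (hfg : f c = g c) (hfg' : f' c = g' c) :
    HasContDerivOn (fun x => if x ≤ c then f x else g x) (fun x => if x ≤ c then f' x else g' x)
      s := by
  have ite_eq_right {u v : ℝ → F} (huv : u c = v c) :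
      EqOn (fun x => if x ≤ c then u x else v x) v (s ∩ Ici c) := by
    rintro x ⟨-, hx⟩
    rcases (mem_Ici.1 hx).eq_or_lt with rfl | hlt
    · simp [huv]
    · simp [hlt.not_ge]
  rw [← inter_univ s, ← Iic_union_Ici (a := c), inter_union_distrib_left]
  exact (hf.congr (fun x hx => if_pos hx.2) fun x hx => if_pos hx.2).union_of_isClosed
    (hg.congr (ite_eq_right hfg) (ite_eq_right hfg')) (hs.inter isClosed_Iic)
    (hs.inter isClosed_Ici)

theorem of_hasDerivAt_Ioi (hf : ContinuousOn f (Ici c)) (hf' : ContinuousOn f' (Ici c))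
    (h : ∀ x ∈ Ioi c, HasDerivAt f (f' x) x) : HasContDerivOn f f' (Ici c) where
  hasDerivWithinAt x hx := by
    rcases (mem_Ici.1 hx).eq_or_lt with rfl | hlt
    · have hlim : Tendsto (deriv f) (𝓝[>] c) (𝓝 (f' c)) :=
        ((hf' c hx).mono_left (nhdsWithin_mono c Ioi_subset_Ici_self)).congr' <|
          eventually_mem_nhdsWithin.mono fun y hy => (h y hy).deriv.symm
      exact hasDerivWithinAt_Ici_of_tendsto_deriv
        (fun y hy => (h y hy).differentiableAt.differentiableWithinAt)
        ((hf c hx).mono Ioi_subset_Ici_self) self_mem_nhdsWithin hlim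
    · exact (h x hlt).hasDerivWithinAt
  continuousOn := hf'

end HasContDerivOn

end Gluing

theorem arccos_inv_sqrt_two : arccos (√2)⁻¹ = π / 4 :=
  arccos_eq_of_eq_cos (by positivity) (by linarith [pi_pos])
    (by rw [cos_pi_div_four, sqrt_div_self])

theorem hasDerivAt_sqrt_sq_sub {c l : ℝ} (h : c < l ^ 2) :
    HasDerivAt (fun x : ℝ => √(x ^ 2 - c)) (l / √(l ^ 2 - c)) l := by
  refine (((hasDerivAt_pow 2 l).sub_const c).sqrt (sub_pos.2 h).ne').congr_deriv ?_
  push_cast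
  field_simp

theorem hasDerivAt_arccos_const_div {c l u' : ℝ} {u : ℝ → ℝ} (hu : HasDerivAt u u' l)
    (h : |c| < u l) :
    HasDerivAt (fun x => arccos (c / u x)) (c * u' / (u l * √(u l ^ 2 - c ^ 2))) l := by
  have hpos : 0 < u l := (abs_nonneg c).trans_lt h
  have hquot : |c / u l| < 1 := by rwa [abs_div, abs_of_pos hpos, div_lt_one hpos]
  have hsqrt : √(1 - (c / u l) ^ 2) = √(u l ^ 2 - c ^ 2) / u l := by
    rw [← sqrt_sq hpos.le, ← sqrt_div' _ (sq_nonneg _), sqrt_sq hpos.le]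
    congr 1
    field_simp
  have hdiv : HasDerivAt (fun x => c / u x) (-(c * u') / u l ^ 2) l := by
    simpa using (hasDerivAt_const l c).fun_div hu hpos.ne'
  refine ((hasDerivAt_arccos (abs_lt.1 hquot).1.ne' (abs_lt.1 hquot).2.ne).comp l
    hdiv).congr_deriv ?_
  rw [hsqrt]
  field_simp

/-- The derivative of `P₁ a`. -/
noncomputable def derivP₁ (a l : ℝ) : ℝ :=
  (8 * π * a ^ 3 * l - 18 * π * a ^ 2 * l ^ 2 + 32 * a * l ^ 3 - 5 * l ^ 4) / a ^ 6

/-- The derivative of `P₂ a`, one-sided at `l = a`, after cancellation of the terms in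
`1 / √(l ^ 2 - a ^ 2)`. -/
noncomputable def derivP₂ (a l : ℝ) : ℝ :=
  (10 * l ^ 4 + 18 * a ^ 2 * l ^ 2 - a ^ 4 - 2 * π * a ^ 3 * (8 * l - 3 * a)
    - 8 * a * (8 * l ^ 2 + a ^ 2) * √(l ^ 2 - a ^ 2)
    + 72 * a ^ 2 * l ^ 2 * arccos (a / l)) / a ^ 6

/-- The derivative of `P₃ a`, one-sided at `l = √2 * a`, after cancellation of the terms in
`1 / √(l ^ 2 - 2 * a ^ 2)`. -/
noncomputable def derivP₃ (a l : ℝ) : ℝ :=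
  (8 * a * (4 * l ^ 2 + a ^ 2) * √(l ^ 2 - 2 * a ^ 2)
    - (5 * l ^ 4 + 18 * a ^ 2 * l ^ 2 + 5 * a ^ 4)
    + 2 * π * a ^ 2 * (9 * l ^ 2 - 8 * a * l + 3 * a ^ 2)
    + 48 * a ^ 3 * l * arccos (a ^ 2 / (l ^ 2 - a ^ 2))
    - 24 * a ^ 2 * (3 * l ^ 2 + a ^ 2) * arccos (a / √(l ^ 2 - a ^ 2))) / a ^ 6

theorem hasDerivAt_P₁ (a l : ℝ) : HasDerivAt (P₁ a) (derivP₁ a l) l := by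
  have hcubic : HasDerivAt
      (fun x => 4 * π * a ^ 3 - 6 * π * a ^ 2 * x + 8 * a * x ^ 2 - x ^ 3)
      (-(6 * π * a ^ 2) + 16 * a * l - 3 * l ^ 2) l := by
    refine (((((hasDerivAt_id' l).const_mul (6 * π * a ^ 2)).const_sub (4 * π * a ^ 3)).fun_add
      ((hasDerivAt_pow 2 l).const_mul (8 * a))).fun_sub (hasDerivAt_pow 3 l)).congr_deriv ?_
    push_cast
    ring
  refine (((hasDerivAt_pow 2 l).fun_mul hcubic).div_const (a ^ 6)).congr_deriv ?_
  rw [derivP₁]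
  push_cast
  ring

section Pieces

variable {a l : ℝ}

theorem hasDerivAt_P₂_sqrt_arccos_terms (ha : 0 < a) (hl : a < l) :
    HasDerivAt
      (fun x => 24 * a ^ 2 * x ^ 2 * arccos (a / x)
        - 8 * a * (2 * x ^ 2 + a ^ 2) * √(x ^ 2 - a ^ 2))
      (48 * a ^ 2 * l * arccos (a / l) - 48 * a * l * √(l ^ 2 - a ^ 2)) l := by
  have hsq : a ^ 2 < l ^ 2 := by gcongr
  have harccos : HasDerivAt (fun x => arccos (a / x)) (a / (l * √(l ^ 2 - a ^ 2))) l := by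
    simpa only [mul_one] using
      hasDerivAt_arccos_const_div (hasDerivAt_id' l) (by rwa [abs_of_pos ha])
  refine ((((hasDerivAt_pow 2 l).const_mul (24 * a ^ 2)).fun_mul harccos).fun_sub
    (((((hasDerivAt_pow 2 l).const_mul 2).add_const (a ^ 2)).const_mul (8 * a)).fun_mul
      (hasDerivAt_sqrt_sq_sub hsq))).congr_deriv ?_
  have hl0 : 0 < l := ha.trans hl
  have hs : 0 < √(l ^ 2 - a ^ 2) := sqrt_pos.2 (sub_pos.2 hsq)
  have hss : √(l ^ 2 - a ^ 2) ^ 2 = l ^ 2 - a ^ 2 := sq_sqrt (sub_pos.2 hsq).le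
  generalize √(l ^ 2 - a ^ 2) = s at *
  have cancel : 24 * a ^ 2 * l ^ 2 * (a / (l * s)) - 8 * a * (2 * l ^ 2 + a ^ 2) * (l / s) =
      -(16 * a * l * s) := by
    field_simp
    linear_combination 16 * hss
  push_cast
  linear_combination cancel

theorem hasDerivAt_P₂ (ha : 0 < a) (hl : a < l) : HasDerivAt (P₂ a) (derivP₂ a l) l := by
  have hpoly : HasDerivAt
      (fun x => 2 * x ^ 4 + 6 * a ^ 2 * x ^ 2 - a ^ 4 - 2 * π * a ^ 3 * (4 * x - 3 * a))
      (8 * l ^ 3 + 12 * a ^ 2 * l - 8 * π * a ^ 3) l := by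
    refine (((((hasDerivAt_pow 4 l).const_mul 2).fun_add
      ((hasDerivAt_pow 2 l).const_mul (6 * a ^ 2))).sub_const (a ^ 4)).fun_sub
      ((((hasDerivAt_id' l).const_mul 4).sub_const (3 * a)).const_mul
        (2 * π * a ^ 3))).congr_deriv ?_
    push_cast
    ring
  refine (((hasDerivAt_id' l).div_const (a ^ 6)).fun_mul
    (hpoly.fun_add (hasDerivAt_P₂_sqrt_arccos_terms ha hl))).congr_deriv ?_
    |>.congr_of_eventuallyEq (.of_forall fun x => ?_)
  · rw [derivP₂]
    ring
  · rw [P₂]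
    ring

theorem sqrt_two_mul_sq (a : ℝ) : (√2 * a) ^ 2 = 2 * a ^ 2 := by
  rw [mul_pow, sq_sqrt zero_le_two]

theorem lt_sqrt_two_mul (ha : 0 < a) : a < √2 * a :=
  lt_mul_of_one_lt_left ha one_lt_sqrt_two

theorem two_mul_sq_lt_sq (ha : 0 ≤ a) (hl : √2 * a < l) : 2 * a ^ 2 < l ^ 2 := by
  rw [← sqrt_two_mul_sq]
  gcongr

theorem hasDerivAt_arccos_sq_div_sq_sub (ha : 0 < a) (hl : √2 * a < l) :
    HasDerivAt (fun x => arccos (a ^ 2 / (x ^ 2 - a ^ 2)))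
      (2 * a ^ 2 / ((l ^ 2 - a ^ 2) * √(l ^ 2 - 2 * a ^ 2))) l := by
  have hl0 : 0 < l := (by positivity : 0 < √2 * a).trans hl
  have hsq := two_mul_sq_lt_sq ha.le hl
  have hsqrt : √((l ^ 2 - a ^ 2) ^ 2 - (a ^ 2) ^ 2) = l * √(l ^ 2 - 2 * a ^ 2) := by
    rw [show (l ^ 2 - a ^ 2) ^ 2 - (a ^ 2) ^ 2 = l ^ 2 * (l ^ 2 - 2 * a ^ 2) by ring,
      sqrt_mul (sq_nonneg l), sqrt_sq hl0.le]
  refine (hasDerivAt_arccos_const_div ((hasDerivAt_pow 2 l).sub_const (a ^ 2))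
    (by rw [abs_of_nonneg (sq_nonneg a)]; linarith)).congr_deriv ?_
  rw [hsqrt]
  push_cast
  field_simp

theorem hasDerivAt_arccos_div_sqrt_sq_sub (ha : 0 < a) (hl : √2 * a < l) :
    HasDerivAt (fun x => arccos (a / √(x ^ 2 - a ^ 2)))
      (a * l / ((l ^ 2 - a ^ 2) * √(l ^ 2 - 2 * a ^ 2))) l := by
  have hsq := two_mul_sq_lt_sq ha.le hl
  have hss : √(l ^ 2 - a ^ 2) ^ 2 = l ^ 2 - a ^ 2 := sq_sqrt (by linarith [sq_nonneg a])
  refine (hasDerivAt_arccos_const_div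
    (hasDerivAt_sqrt_sq_sub (by linarith [sq_nonneg a] : a ^ 2 < l ^ 2))
    (by rw [abs_of_pos ha]; exact lt_sqrt_of_sq_lt (by linarith))).congr_deriv ?_
  rw [hss, show l ^ 2 - a ^ 2 - a ^ 2 = l ^ 2 - 2 * a ^ 2 by ring]
  nth_rewrite 3 [← hss]
  field_simp

theorem hasDerivAt_P₃_sqrt_arccos_terms (ha : 0 < a) (hl : √2 * a < l) :
    HasDerivAt
      (fun x => 8 * a * (x ^ 2 + a ^ 2) * √(x ^ 2 - 2 * a ^ 2)
        + 24 * a ^ 3 * x * arccos (a ^ 2 / (x ^ 2 - a ^ 2))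
        - 24 * a ^ 2 * (x ^ 2 + a ^ 2) * arccos (a / √(x ^ 2 - a ^ 2)))
      (24 * a * l * √(l ^ 2 - 2 * a ^ 2) + 24 * a ^ 3 * arccos (a ^ 2 / (l ^ 2 - a ^ 2))
        - 48 * a ^ 2 * l * arccos (a / √(l ^ 2 - a ^ 2))) l := by
  have hl0 : 0 < l := (by positivity : 0 < √2 * a).trans hl
  have hsq₂ : 2 * a ^ 2 < l ^ 2 := two_mul_sq_lt_sq ha.le hl
  have hsq : a ^ 2 < l ^ 2 := by linarith [sq_nonneg a]
  have ht : 0 < √(l ^ 2 - 2 * a ^ 2) := sqrt_pos.2 (sub_pos.2 hsq₂)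
  have htt : √(l ^ 2 - 2 * a ^ 2) ^ 2 = l ^ 2 - 2 * a ^ 2 := sq_sqrt (sub_pos.2 hsq₂).le
  refine (((((hasDerivAt_pow 2 l).add_const (a ^ 2)).const_mul (8 * a)).fun_mul
    (hasDerivAt_sqrt_sq_sub hsq₂)).fun_add
    (((hasDerivAt_id' l).const_mul (24 * a ^ 3)).fun_mul
      (hasDerivAt_arccos_sq_div_sq_sub ha hl))).fun_sub
    ((((hasDerivAt_pow 2 l).add_const (a ^ 2)).const_mul (24 * a ^ 2)).fun_mul
      (hasDerivAt_arccos_div_sqrt_sq_sub ha hl)) |>.congr_deriv ?_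
  generalize √(l ^ 2 - 2 * a ^ 2) = t at *
  have cancel : 8 * a * (l ^ 2 + a ^ 2) * (l / t)
      + 24 * a ^ 3 * l * (2 * a ^ 2 / ((l ^ 2 - a ^ 2) * t))
      - 24 * a ^ 2 * (l ^ 2 + a ^ 2) * (a * l / ((l ^ 2 - a ^ 2) * t)) = 8 * a * l * t := by
    have hne : l ^ 2 - a ^ 2 ≠ 0 := (sub_pos.2 hsq).ne'
    field_simp
    linear_combination -8 * (l ^ 2 - a ^ 2) * htt
  push_cast
  linear_combination cancel

theorem hasDerivAt_P₃ (ha : 0 < a) (hl : √2 * a < l) : HasDerivAt (P₃ a) (derivP₃ a l) l := by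
  have hpoly : HasDerivAt
      (fun x => 2 * π * a ^ 2 * (3 * x ^ 2 - 4 * a * x + 3 * a ^ 2)
        - (x ^ 2 + a ^ 2) * (x ^ 2 + 5 * a ^ 2))
      (2 * π * a ^ 2 * (6 * l - 4 * a) - (4 * l ^ 3 + 12 * a ^ 2 * l)) l := by
    refine ((((((hasDerivAt_pow 2 l).const_mul 3).fun_sub
      ((hasDerivAt_id' l).const_mul (4 * a))).add_const (3 * a ^ 2)).const_mul
        (2 * π * a ^ 2)).fun_sub
      (((hasDerivAt_pow 2 l).add_const (a ^ 2)).fun_mul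
        ((hasDerivAt_pow 2 l).add_const (5 * a ^ 2)))).congr_deriv ?_
    push_cast
    ring
  refine (((hasDerivAt_id' l).div_const (a ^ 6)).fun_mul
    (hpoly.fun_add (hasDerivAt_P₃_sqrt_arccos_terms ha hl))).congr_deriv ?_
    |>.congr_of_eventuallyEq (.of_forall fun x => ?_)
  · rw [derivP₃]
    ring
  · rw [P₃]
    ring

theorem hasContDerivOn_P₁ (a : ℝ) : HasContDerivOn (P₁ a) (derivP₁ a) univ where
  hasDerivWithinAt l _ := (hasDerivAt_P₁ a l).hasDerivWithinAt
  continuousOn := by unfold derivP₁; fun_prop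

theorem hasContDerivOn_P₂ (ha : 0 < a) : HasContDerivOn (P₂ a) (derivP₂ a) (Ici a) := by
  have hl (l : ℝ) (h : l ∈ Ici a) : l ≠ 0 := (ha.trans_le h).ne'
  refine .of_hasDerivAt_Ioi ?_ ?_ fun l => hasDerivAt_P₂ ha
  · unfold P₂
    fun_prop (disch := assumption)
  · unfold derivP₂
    fun_prop (disch := assumption)

theorem hasContDerivOn_P₃ (ha : 0 < a) :
    HasContDerivOn (P₃ a) (derivP₃ a) (Ici (√2 * a)) := by
  have hpos (l : ℝ) (h : √2 * a ≤ l) : 0 < l ^ 2 - a ^ 2 :=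
    sub_pos.2 (pow_lt_pow_left₀ ((lt_sqrt_two_mul ha).trans_le h) ha.le two_ne_zero)
  have hne (l : ℝ) (h : l ∈ Ici (√2 * a)) : l ^ 2 - a ^ 2 ≠ 0 := (hpos l h).ne'
  have hsqrt (l : ℝ) (h : l ∈ Ici (√2 * a)) : √(l ^ 2 - a ^ 2) ≠ 0 := (sqrt_pos.2 (hpos l h)).ne'
  refine .of_hasDerivAt_Ioi ?_ ?_ fun l => hasDerivAt_P₃ ha
  · unfold P₃
    fun_prop (disch := assumption)
  · unfold derivP₃
    fun_prop (disch := assumption)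

theorem P₁_self_eq_P₂_self (ha : a ≠ 0) : P₁ a a = P₂ a a := by
  simp only [P₁, P₂, div_self ha, sub_self, sqrt_zero, arccos_one]
  ring

theorem derivP₁_self_eq_derivP₂_self (ha : a ≠ 0) : derivP₁ a a = derivP₂ a a := by
  simp only [derivP₁, derivP₂, div_self ha, sub_self, sqrt_zero, arccos_one]
  ring

theorem sqrt_sqrt_two_mul_sq_sub_sq (ha : 0 ≤ a) : √((√2 * a) ^ 2 - a ^ 2) = a := by
  rw [sqrt_two_mul_sq, two_mul, add_sub_cancel_right, sqrt_sq ha]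

theorem arccos_div_sqrt_two_mul (ha : a ≠ 0) : arccos (a / (√2 * a)) = π / 4 := by
  rw [div_mul_cancel_right₀ ha, arccos_inv_sqrt_two]

theorem arccos_sq_div_sqrt_two_mul_sq_sub_sq (ha : a ≠ 0) :
    arccos (a ^ 2 / ((√2 * a) ^ 2 - a ^ 2)) = 0 := by
  rw [sqrt_two_mul_sq, two_mul, add_sub_cancel_right, div_self (pow_ne_zero 2 ha), arccos_one]

theorem P₂_sqrt_two_mul_eq_P₃ (ha : 0 < a) : P₂ a (√2 * a) = P₃ a (√2 * a) := by
  have hsq := sqrt_two_mul_sq a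
  simp only [P₂, P₃, sqrt_sqrt_two_mul_sq_sub_sq ha.le, arccos_div_sqrt_two_mul ha.ne',
    arccos_sq_div_sqrt_two_mul_sq_sub_sq ha.ne', sub_eq_zero.2 hsq, div_self ha.ne', sqrt_zero,
    arccos_one]
  linear_combination √2 * a / a ^ 6 * (3 * (√2 * a) ^ 2 + 2 * a ^ 2) * hsq

theorem derivP₂_sqrt_two_mul_eq_derivP₃ (ha : 0 < a) :
    derivP₂ a (√2 * a) = derivP₃ a (√2 * a) := by
  have hsq := sqrt_two_mul_sq a
  simp only [derivP₂, derivP₃, sqrt_sqrt_two_mul_sq_sub_sq ha.le, arccos_div_sqrt_two_mul ha.ne',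
    arccos_sq_div_sqrt_two_mul_sq_sub_sq ha.ne', sub_eq_zero.2 hsq, div_self ha.ne', sqrt_zero,
    arccos_one]
  linear_combination (15 * (√2 * a) ^ 2 + 2 * a ^ 2) / a ^ 6 * hsq

theorem contDiff_P (ha : 0 < a) : ContDiff ℝ 1 (P a) := by
  have hab := (lt_sqrt_two_mul ha).le
  have h₂₃ := ((hasContDerivOn_P₂ ha).mono inter_subset_left).ite_le
    ((hasContDerivOn_P₃ ha).mono inter_subset_right) isClosed_Ici (P₂_sqrt_two_mul_eq_P₃ ha)
    (derivP₂_sqrt_two_mul_eq_derivP₃ ha)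
  refine ((hasContDerivOn_P₁ a).mono (subset_univ _)).ite_le (h₂₃.mono inter_subset_right)
    isClosed_univ ?_ ?_ |>.contDiff_one
  · rw [if_pos hab, P₁_self_eq_P₂_self ha.ne']
  · rw [if_pos hab, derivP₁_self_eq_derivP₂_self ha.ne']

end Pieces

theorem density_contDiff_general (a : ℝ) (ha : 0 < a) :
    ContDiff ℝ 1 (P a) ∧
    derivWithin (P₁ a) (Iic a) a = derivWithin (P₂ a) (Ici a) a ∧
    derivWithin (P₂ a) (Iic (√2 * a)) (√2 * a) = derivWithin (P₃ a) (Ici (√2 * a)) (√2 * a) := by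
  refine ⟨contDiff_P ha, ?_, ?_⟩
  · rw [(hasDerivAt_P₁ a a).hasDerivWithinAt.derivWithin (uniqueDiffWithinAt_Iic a),
      ((hasContDerivOn_P₂ ha).hasDerivWithinAt a self_mem_Ici).derivWithin
        (uniqueDiffWithinAt_Ici a), derivP₁_self_eq_derivP₂_self ha.ne']
  · rw [(hasDerivAt_P₂ ha (lt_sqrt_two_mul ha)).hasDerivWithinAt.derivWithin
        (uniqueDiffWithinAt_Iic _),
      ((hasContDerivOn_P₃ ha).hasDerivWithinAt _ self_mem_Ici).derivWithin
        (uniqueDiffWithinAt_Ici _), derivP₂_sqrt_two_mul_eq_derivP₃ ha]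

theorem density_contDiff (a : ℝ) (ha : 0 < a) :
    ContDiffOn ℝ 1 (P a) (Set.Ioo 0 (Real.sqrt 3 * a)) ∧
    derivWithin (P₁ a) (Set.Iic a) a = derivWithin (P₂ a) (Set.Ici a) a ∧
    derivWithin (P₂ a) (Set.Iic (Real.sqrt 2 * a)) (Real.sqrt 2 * a) =
      derivWithin (P₃ a) (Set.Ici (Real.sqrt 2 * a)) (Real.sqrt 2 * a) := by
  obtain ⟨hP, hderiv⟩ := density_contDiff_general a ha
  exact ⟨hP.contDiffOn, hderiv⟩
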